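/- Let $X$ be a topological space. Let $\mathcal{L}X$ be the set of lower semicontinuous functions from $X$ to $[0,\infty]$, ordered pointwise. A prevision on $X$ is a Scott-continuous map $F\colon \mathcal{L}X\to[0,\infty]$ (monotone and preserving suprema of directed families) such that $F(ah)=aF(h)$ for all real $a\ge 0$ and $h\in\mathcal{L}X$ (with $0\cdot\infty=0$). It is sublinear if $F(h+h')\le F(h)+F(h')$ for all $h,h'\in\mathcal{L}X$, subnormalized if $F(\mathbf{1}+h)\le 1+F(h)$ for all $h\in\mathcal{L}X$, and normalized if $F(\mathbf{1}+h)=1+F(h)$ for all $h\in\mathcal{L}X$, where $\mathbf 1$ is the constant function $1$. Sets of previsions carry the weak topology, generated by the sets $\{F : F(h)>r\}$ for $h\in\mathcal{L}X$ and $r\in[0,\infty)$. Let $\mathrm{Pred}^\ast(X)$ be one of the following three spaces: the space of all previsions on $X$, the space of subnormalized previsions on $X$, or the space of normalized previsions on $X$; and let $\mathrm{Pred}^\ast_{\mathrm{sub}}(X)$ be its subspace of sublinear previsions. Let $\mathcal{Q}\mathrm{Pred}^\ast_{\mathrm{sub}}(X)$ be the collection of all subsets $\mathcal{Q}$ of $\mathrm{Pred}^\ast_{\mathrm{sub}}(X)$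 that are nonempty, compact in the weak topology, and of the form $\bigcap_{i\in I}\{F\in\mathrm{Pred}^\ast_{\mathrm{sub}}(X) : F(h_i)\ge 1\}$ for some family $(h_i)_{i\in I}$ of elements of $\mathcal{L}X$; equip it with the topology generated by the sets $\{\mathcal{Q}\in\mathcal{Q}\mathrm{Pred}^\ast_{\mathrm{sub}}(X) : \mathcal{Q}\subseteq U\}$, for $U$ ranging over the open subsets of $\mathrm{Pred}^\ast_{\mathrm{sub}}(X)$. Then the map $\mathrm{minP}$ sending $\mathcal{Q}$ to the prevision $h\mapsto\min_{F\in\mathcal{Q}}F(h)$ (the infimum is attained) and the map $\mathrm{nimP}$ sending $P\in\mathrm{Pred}^\ast(X)$ to $\{F\in\mathrm{Pred}^\ast_{\mathrm{sub}}(X) : P\le F \text{ pointwise}\}$ are mutually inverse homeomorphisms between $\mathcal{Q}\mathrm{Pred}^\ast_{\mathrm{sub}}(X)$ and $\mathrm{Pred}^\ast(X)$, in each of the three cases. -/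

import Mathlib

open scoped ENNReal NNReal

/-- `ℒX`: the lower semicontinuous functions from `X` to `[0,∞]`, ordered pointwise
(the order is the one that a subtype inherits from `X → ℝ≥0∞`). -/
abbrev LForm (X : Type*) [TopologicalSpace X] : Type _ :=
  {h : X → ℝ≥0∞ // LowerSemicontinuous h}

namespace LForm

variable {X : Type*} [TopologicalSpace X]

/-- Pointwise addition on `ℒX`. -/
noncomputable instance : Add (LForm X) :=
  ⟨fun h h' => ⟨fun x => h.1 x + h'.1 x, h.2.add h'.2⟩⟩

/-- Pointwise multiplication by a nonnegative real on `ℒX` (with `0 * ∞ = 0`). -/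
noncomputable instance : SMul ℝ≥0 (LForm X) :=
  ⟨fun a h => ⟨fun x => (a : ℝ≥0∞) * h.1 x,
    (ENNReal.continuous_const_mul ENNReal.coe_ne_top).comp_lowerSemicontinuous h.2
      (fun _ _ hxy => mul_le_mul_right hxy _)⟩⟩

/-- The constant function with value `1`. -/
noncomputable instance : One (LForm X) := ⟨⟨fun _ => 1, lowerSemicontinuous_const⟩⟩

end LForm

/-- A prevision on `X`: a Scott-continuous, positively homogeneous map `ℒX → [0,∞]`. -/
@[ext]
structure Prevision (X : Type*) [TopologicalSpace X] where
  /-- the underlying function -/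
  toFun : LForm X → ℝ≥0∞
  scottContinuous : ScottContinuous toFun
  map_smul : ∀ (a : ℝ≥0) (h : LForm X), toFun (a • h) = (a : ℝ≥0∞) * toFun h

namespace Prevision

variable {X : Type*} [TopologicalSpace X]

instance : CoeFun (Prevision X) (fun _ => LForm X → ℝ≥0∞) := ⟨toFun⟩

/-- The weak topology, generated by the sets `[h > r] = {F | F h > r}`. -/
instance : TopologicalSpace (Prevision X) :=
  TopologicalSpace.generateFrom
    {S | ∃ (h : LForm X) (r : ℝ≥0), S = {F : Prevision X | (r : ℝ≥0∞) < F h}}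

/-- Sublinearity: `F (h + h') ≤ F h + F h'`. -/
def IsSublinear (F : Prevision X) : Prop :=
  ∀ h h' : LForm X, F (h + h') ≤ F h + F h'

/-- Subnormalization: `F (1 + h) ≤ 1 + F h`. -/
def IsSubnormalized (F : Prevision X) : Prop :=
  ∀ h : LForm X, F (1 + h) ≤ 1 + F h

/-- Normalization: `F (1 + h) = 1 + F h`. -/
def IsNormalized (F : Prevision X) : Prop :=
  ∀ h : LForm X, F (1 + h) = 1 + F h

end Prevision

/-- The three flavours of previsions: no constraint, subnormalized, normalized. -/
inductive PrevKind
  | plain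
  | subnormalized
  | normalized

/-- The constraint that a flavour puts on a prevision. -/
def PrevKind.Holds {X : Type*} [TopologicalSpace X] : PrevKind → Prevision X → Prop
  | .plain, _ => True
  | .subnormalized, F => F.IsSubnormalized
  | .normalized, F => F.IsNormalized

/-- The space of previsions on `X` of the given flavour, a subspace of the space of all
previsions. -/
abbrev Pred (k : PrevKind) (X : Type*) [TopologicalSpace X] : Type _ :=
  {F : Prevision X // k.Holds F}

/-- The space of sublinear previsions on `X` of the given flavour, a subspace of the space of
all previsions. -/
abbrev PredSub (k : PrevKind) (X : Type*) [TopologicalSpace X] : Type _ :=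
  {F : Prevision X // k.Holds F ∧ F.IsSublinear}

/-- `𝒬Pred_sub(X)`: the nonempty, weakly compact sets of sublinear previsions (of the given
flavour) that are intersections of sets of the form `{F | F h ≥ 1}`, `h ∈ ℒX`. -/
@[ext]
structure QPredSub (k : PrevKind) (X : Type*) [TopologicalSpace X] where
  /-- the underlying set of sublinear previsions -/
  carrier : Set (PredSub k X)
  nonempty : carrier.Nonempty
  isCompact : IsCompact carrier
  exists_eq_iInter : ∃ H : Set (LForm X),
    carrier = ⋂ h ∈ H, {F : PredSub k X | 1 ≤ F.1 h}

/-- The upper Vietoris topology, generated by the sets `{Q | Q ⊆ U}` for `U` weakly open. -/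
instance (k : PrevKind) (X : Type*) [TopologicalSpace X] : TopologicalSpace (QPredSub k X) :=
  TopologicalSpace.generateFrom
    {S | ∃ U : Set (PredSub k X), IsOpen U ∧ S = {Q : QPredSub k X | Q.carrier ⊆ U}}

/-- `minP Q` is the functional `h ↦ inf_{F ∈ Q} F h`. -/
noncomputable def minP {k : PrevKind} {X : Type*} [TopologicalSpace X]
    (Q : Set (PredSub k X)) (h : LForm X) : ℝ≥0∞ :=
  ⨅ F ∈ Q, F.1 h

/-- `nimP P` is the set of sublinear previsions (of the given flavour) that are pointwise
above `P`. -/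
def nimP {k : PrevKind} {X : Type*} [TopologicalSpace X] (P : Pred k X) :
    Set (PredSub k X) :=
  {F | ∀ h : LForm X, P.1 h ≤ F.1 h}

namespace LForm

variable {X : Type*} [TopologicalSpace X]

theorem add_apply (h h' : LForm X) (x : X) : (h + h').1 x = h.1 x + h'.1 x := rfl

theorem smul_apply (a : ℝ≥0) (h : LForm X) (x : X) : (a • h).1 x = (a : ℝ≥0∞) * h.1 x := rfl

theorem smul_smul (a b : ℝ≥0) (h : LForm X) : a • b • h = (a * b) • h := by
  ext x
  simp only [smul_apply, ENNReal.coe_mul, mul_assoc]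

theorem one_smul (h : LForm X) : (1 : ℝ≥0) • h = h := by
  ext x
  simp only [smul_apply, ENNReal.coe_one, one_mul]

theorem smul_add (a : ℝ≥0) (h h' : LForm X) : a • (h + h') = a • h + a • h' := by
  ext x
  simp only [smul_apply, add_apply, mul_add]

theorem smul_mono (a : ℝ≥0) {h h' : LForm X} (hh : h ≤ h') : a • h ≤ a • h' :=
  fun x => mul_le_mul_right (hh x) _

theorem add_mono {h h' g g' : LForm X} (h₁ : h ≤ h') (h₂ : g ≤ g') : h + g ≤ h' + g' :=
  fun x => add_le_add (h₁ x) (h₂ x)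

/-- The pointwise supremum of a set of lower semicontinuous functions. -/
noncomputable def pointwiseSup (d : Set (LForm X)) : LForm X :=
  ⟨fun x => ⨆ g ∈ d, g.1 x, lowerSemicontinuous_biSup fun g _ => g.2⟩

theorem isLUB_pointwiseSup (d : Set (LForm X)) : IsLUB d (pointwiseSup d) :=
  ⟨fun g hg x => le_iSup₂ (f := fun (g : LForm X) (_ : g ∈ d) => g.1 x) g hg,
    fun _ hb x => iSup₂_le fun _ hg => hb hg x⟩

end LForm

namespace Prevision

variable {X : Type*} [TopologicalSpace X]

theorem mono (F : Prevision X) {h h' : LForm X} (hh : h ≤ h') : F h ≤ F h' :=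
  F.scottContinuous.monotone hh

theorem apply_pointwiseSup (F : Prevision X) {d : Set (LForm X)} (hn : d.Nonempty)
    (hd : DirectedOn (· ≤ ·) d) : F (LForm.pointwiseSup d) = ⨆ g ∈ d, F g := by
  have := F.scottContinuous hn hd (LForm.isLUB_pointwiseSup d)
  rw [← this.sSup_eq, sSup_image]

theorem apply_smul_one_add_le {F : Prevision X} (hF : F.IsSubnormalized) (a : ℝ≥0)
    (h : LForm X) : F (a • (1 : LForm X) + h) ≤ a + F h := by
  rcases eq_or_ne a 0 with rfl | ha
  · refine le_of_eq ?_
    rw [ENNReal.coe_zero, zero_add]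
    congr 1
    ext x
    simp [LForm.add_apply, LForm.smul_apply]
  · have hah : h = a • a⁻¹ • h := by
      rw [LForm.smul_smul, mul_inv_cancel₀ ha, LForm.one_smul]
    rw [hah, ← LForm.smul_add, F.map_smul, F.map_smul a]
    refine (mul_le_mul_right (hF _) _).trans ?_
    rw [mul_add, mul_one]

theorem apply_smul_one_add {F : Prevision X} (hF : F.IsNormalized) (a : ℝ≥0)
    (h : LForm X) : F (a • (1 : LForm X) + h) = a + F h := by
  rcases eq_or_ne a 0 with rfl | ha
  · rw [ENNReal.coe_zero, zero_add]
    congr 1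
    ext x
    simp [LForm.add_apply, LForm.smul_apply]
  · have hah : h = a • a⁻¹ • h := by
      rw [LForm.smul_smul, mul_inv_cancel₀ ha, LForm.one_smul]
    rw [hah, ← LForm.smul_add, F.map_smul, F.map_smul a, hF, mul_add, mul_one]

theorem apply_zero_smul (F : Prevision X) (h : LForm X) : F ((0 : ℝ≥0) • h) = 0 := by
  rw [F.map_smul, ENNReal.coe_zero, zero_mul]

theorem IsSubnormalized.apply_one_le {F : Prevision X} (hF : F.IsSubnormalized) :
    F 1 ≤ 1 := by
  have h := hF ((0 : ℝ≥0) • 1)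
  rw [F.apply_zero_smul, add_zero] at h
  refine le_trans (F.mono fun x => ?_) h
  simp [LForm.add_apply]

theorem IsNormalized.isSubnormalized {F : Prevision X} (hF : F.IsNormalized) :
    F.IsSubnormalized := fun h => (hF h).le

theorem tendsto_nhds {ι : Type*} {l : Filter ι} {F : ι → Prevision X} {F₀ : Prevision X}
    (hF : ∀ (h : LForm X) (r : ℝ≥0), (r : ℝ≥0∞) < F₀ h → ∀ᶠ i in l, (r : ℝ≥0∞) < F i h) :
    Filter.Tendsto F l (nhds F₀) := by
  refine TopologicalSpace.tendsto_nhds_generateFrom_iff.2 ?_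
  rintro S ⟨h, r, rfl⟩ hS
  exact hF h r hS

theorem isOpen_lt_apply (h : LForm X) (r : ℝ≥0) :
    IsOpen {F : Prevision X | (r : ℝ≥0∞) < F h} :=
  TopologicalSpace.isOpen_generateFrom_of_mem ⟨h, r, rfl⟩

theorem lowerSemicontinuous_apply (h : LForm X) :
    LowerSemicontinuous fun F : Prevision X => F h := by
  refine lowerSemicontinuous_iff_isOpen_preimage.2 fun y => ?_
  rcases eq_or_ne y ⊤ with rfl | hy
  · simp
  · lift y to ℝ≥0 using hy
    exact isOpen_lt_apply h y

end Prevision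

theorem PrevKind.Holds.isSubnormalized {X : Type*} [TopologicalSpace X] {k : PrevKind}
    {F : Prevision X} (hk : k ≠ .plain) (hF : k.Holds F) : F.IsSubnormalized := by
  cases k with
  | plain => exact absurd rfl hk
  | subnormalized => exact hF
  | normalized => exact Prevision.IsNormalized.isSubnormalized hF

/-- Monotone sublinear functionals on `ℒX`, not required to be Scott-continuous. -/
structure IsSublinearFunctional {X : Type*} [TopologicalSpace X] (G : LForm X → ℝ≥0∞) :
    Prop where
  mono : Monotone G
  smul_le : ∀ (a : ℝ≥0) (h : LForm X), G (a • h) ≤ a * G h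
  add_le : ∀ h h' : LForm X, G (h + h') ≤ G h + G h'

namespace IsSublinearFunctional

variable {X : Type*} [TopologicalSpace X]

/-- The lower envelope of a convex cone of pairs `(h, y)` is a sublinear functional. -/
theorem sInf_rel {R : LForm X → ℝ≥0∞ → Prop}
    (mono : ∀ {h h' y}, h ≤ h' → R h' y → R h y)
    (zero : ∀ h, R ((0 : ℝ≥0) • h) 0)
    (smul : ∀ {a : ℝ≥0} {h y}, R h y → R (a • h) (a * y))
    (add : ∀ {h h' y y'}, R h y → R h' y' → R (h + h') (y + y')) :
    IsSublinearFunctional fun h => sInf {y | R h y} where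
  mono _ _ hh := sInf_le_sInf fun _ hy => mono hh hy
  smul_le a h := by
    rcases eq_or_ne a 0 with rfl | ha
    · exact (sInf_le (zero h)).trans zero_le
    · rw [sInf_eq_iInf' {y | R h y}, ENNReal.mul_iInf_of_ne (by simpa) ENNReal.coe_ne_top]
      exact le_iInf fun y => sInf_le (smul y.2)
  add_le h h' := by
    rw [sInf_eq_iInf' {y | R h y}, sInf_eq_iInf' {y | R h' y}]
    exact ENNReal.le_iInf_add_iInf fun y y' => sInf_le (add y.2 y'.2)

theorem map_smul {G : LForm X → ℝ≥0∞} (hG : IsSublinearFunctional G) (a : ℝ≥0) (h : LForm X) :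
    G (a • h) = a * G h := by
  refine le_antisymm (hG.smul_le a h) ?_
  rcases eq_or_ne a 0 with rfl | ha
  · simp
  · have h₁ := hG.smul_le a⁻¹ (a • h)
    rw [LForm.smul_smul, inv_mul_cancel₀ ha, LForm.one_smul] at h₁
    refine (mul_le_mul_right h₁ _).trans ?_
    rw [← mul_assoc, ← ENNReal.coe_mul, mul_inv_cancel₀ ha, ENNReal.coe_one, one_mul]

theorem zero_smul {G : LForm X → ℝ≥0∞} (hG : IsSublinearFunctional G) (h : LForm X) :
    G ((0 : ℝ≥0) • h) = 0 := by
  rw [hG.map_smul, ENNReal.coe_zero, zero_mul]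

/-- The infimum of a nonempty chain of sublinear functionals is sublinear. -/
theorem sInf_chain {c : Set (LForm X → ℝ≥0∞)} (hc : IsChain (· ≤ ·) c) (hn : c.Nonempty)
    (hG : ∀ G ∈ c, IsSublinearFunctional G) :
    IsSublinearFunctional fun h => sInf {y | ∃ G ∈ c, G h ≤ y} := by
  refine sInf_rel ?_ ?_ ?_ ?_
  · rintro h h' y hh ⟨G, hGc, hy⟩
    exact ⟨G, hGc, ((hG G hGc).mono hh).trans hy⟩
  · intro h
    obtain ⟨G, hGc⟩ := hn
    exact ⟨G, hGc, ((hG G hGc).zero_smul h).le⟩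
  · rintro a h y ⟨G, hGc, hy⟩
    exact ⟨G, hGc, ((hG G hGc).smul_le a h).trans (mul_le_mul_right hy _)⟩
  · rintro h h' y y' ⟨G, hGc, hy⟩ ⟨G', hGc', hy'⟩
    rcases hc.total hGc hGc' with hle | hle
    · exact ⟨G, hGc, ((hG G hGc).add_le h h').trans (add_le_add hy ((hle h').trans hy'))⟩
    · exact ⟨G', hGc', ((hG G' hGc').add_le h h').trans (add_le_add ((hle h).trans hy) hy')⟩

/-- Every sublinear functional above a functional `P` lies above a minimal one. -/
theorem exists_minimal {P G : LForm X → ℝ≥0∞} (hG : IsSublinearFunctional G) (hP : P ≤ G) :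
    ∃ M ≤ G, IsSublinearFunctional M ∧ P ≤ M ∧
      ∀ N, IsSublinearFunctional N → P ≤ N → N ≤ M → M ≤ N := by
  have hzorn := zorn_le_nonempty₀ (α := (LForm X → ℝ≥0∞)ᵒᵈ)
    {M | IsSublinearFunctional (OrderDual.ofDual M) ∧ P ≤ OrderDual.ofDual M} ?_
    (OrderDual.toDual G) ⟨hG, hP⟩
  · obtain ⟨M, hMG, hM⟩ := hzorn
    exact ⟨OrderDual.ofDual M, hMG, hM.1.1, hM.1.2,
      fun N hN hPN hNM => hM.2 (y := OrderDual.toDual N) ⟨hN, hPN⟩ hNM⟩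
  · intro c hcS hc N hN
    refine ⟨OrderDual.toDual fun h => sInf {y | ∃ M ∈ OrderDual.toDual ⁻¹' c, M h ≤ y},
      ⟨sInf_chain (fun A hA B hB hAB => (hc hA hB hAB).symm) ⟨OrderDual.ofDual N, hN⟩
        fun M hM => (hcS hM).1, ?_⟩, ?_⟩
    · rintro h
      exact le_sInf fun y ⟨M, hM, hy⟩ => ((hcS hM).2 h).trans hy
    · intro M hM h
      exact sInf_le ⟨OrderDual.ofDual M, hM, le_rfl⟩

/-- The Scott-continuous regularization step of a sublinear functional is sublinear. -/
theorem directedEnvelope {G : LForm X → ℝ≥0∞} (hG : IsSublinearFunctional G) :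
    IsSublinearFunctional fun h => sInf {y | ∃ d : Set (LForm X), d.Nonempty ∧
      DirectedOn (· ≤ ·) d ∧ h ≤ LForm.pointwiseSup d ∧ ∀ g ∈ d, G g ≤ y} := by
  refine sInf_rel ?_ ?_ ?_ ?_
  · rintro h h' y hh ⟨d, hn, hd, hs, hy⟩
    exact ⟨d, hn, hd, hh.trans hs, hy⟩
  · intro h
    refine ⟨{(0 : ℝ≥0) • h}, Set.singleton_nonempty _, directedOn_singleton _,
      (LForm.isLUB_pointwiseSup _).1 rfl, ?_⟩
    rintro g rfl
    exact (hG.zero_smul h).le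
  · rintro a h y ⟨d, hn, hd, hs, hy⟩
    refine ⟨(a • ·) '' d, hn.image _, ?_, ?_, ?_⟩
    · rintro _ ⟨g, hg, rfl⟩ _ ⟨g', hg', rfl⟩
      obtain ⟨e, he, h₁, h₂⟩ := hd g hg g' hg'
      exact ⟨_, ⟨e, he, rfl⟩, LForm.smul_mono a h₁, LForm.smul_mono a h₂⟩
    · intro x
      refine (mul_le_mul_right (hs x) (a : ℝ≥0∞)).trans ?_
      simp only [LForm.pointwiseSup, ENNReal.mul_iSup]
      exact iSup₂_le fun g hg =>
        (LForm.isLUB_pointwiseSup _).1 (Set.mem_image_of_mem _ hg) x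
    · rintro _ ⟨g, hg, rfl⟩
      exact (hG.smul_le a g).trans (mul_le_mul_right (hy g hg) _)
  · rintro h h' y y' ⟨d, hn, hd, hs, hy⟩ ⟨d', hn', hd', hs', hy'⟩
    refine ⟨Set.image2 (· + ·) d d', hn.image2 hn', ?_, ?_, ?_⟩
    · rintro _ ⟨g, hg, g', hg', rfl⟩ _ ⟨f, hf, f', hf', rfl⟩
      obtain ⟨e, he, h₁, h₂⟩ := hd g hg f hf
      obtain ⟨e', he', h₁', h₂'⟩ := hd' g' hg' f' hf'
      exact ⟨_, ⟨e, he, e', he', rfl⟩, LForm.add_mono h₁ h₁', LForm.add_mono h₂ h₂'⟩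
    · intro x
      refine (add_le_add (hs x) (hs' x)).trans ?_
      exact ENNReal.biSup_add_biSup_le' hn hn' fun g hg g' hg' =>
        (LForm.isLUB_pointwiseSup _).1 (Set.mem_image2_of_mem hg hg') x
    · rintro _ ⟨g, hg, g', hg', rfl⟩
      exact (hG.add_le g g').trans (add_le_add (hy g hg) (hy' g' hg'))

/-- The functional `h ↦ inf_a (G (a + h) - a)` is sublinear when `G` is. -/
theorem translationEnvelope {G : LForm X → ℝ≥0∞} (hG : IsSublinearFunctional G) :
    IsSublinearFunctional fun h =>
      sInf {y | ∃ a : ℝ≥0, G (a • (1 : LForm X) + h) ≤ a + y} := by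
  refine sInf_rel ?_ ?_ ?_ ?_
  · rintro h h' y hh ⟨a, hy⟩
    exact ⟨a, (hG.mono (LForm.add_mono le_rfl hh)).trans hy⟩
  · intro h
    refine ⟨0, (hG.add_le _ _).trans ?_⟩
    simp [hG.zero_smul]
  · rintro b h y ⟨a, hy⟩
    refine ⟨b * a, ?_⟩
    rw [← LForm.smul_smul, ← LForm.smul_add, ENNReal.coe_mul, ← mul_add]
    exact (hG.smul_le _ _).trans (mul_le_mul_right hy _)
  · rintro h h' y y' ⟨a, hy⟩ ⟨a', hy'⟩
    refine ⟨a + a', ?_⟩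
    have : (a + a') • (1 : LForm X) + (h + h')
        = (a • (1 : LForm X) + h) + (a' • (1 : LForm X) + h') := by
      ext x
      simp only [LForm.add_apply, LForm.smul_apply, ENNReal.coe_add]
      ring
    rw [this, ENNReal.coe_add, add_add_add_comm]
    exact (hG.add_le _ _).trans (add_le_add hy hy')

/-- The largest sublinear functional with value at most `p` at `h₀` and, unless the flavour is
`plain`, at most `1` at the constant `1`. -/
theorem dominating (k : PrevKind) (h₀ : LForm X) (p : ℝ≥0∞) :
    IsSublinearFunctional fun h => sInf {y | ∃ a b : ℝ≥0, (k = .plain → a = 0) ∧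
      h ≤ a • (1 : LForm X) + b • h₀ ∧ a + b * p ≤ y} := by
  refine sInf_rel ?_ ?_ ?_ ?_
  · rintro h h' y hh ⟨a, b, hk, hle, hy⟩
    exact ⟨a, b, hk, hh.trans hle, hy⟩
  · intro h
    refine ⟨0, 0, fun _ => rfl, fun x => ?_, by simp⟩
    simp [LForm.smul_apply]
  · rintro c h y ⟨a, b, hk, hle, hy⟩
    refine ⟨c * a, c * b, fun h => by rw [hk h, mul_zero], ?_, ?_⟩
    · rw [← LForm.smul_smul, ← LForm.smul_smul, ← LForm.smul_add]
      exact LForm.smul_mono c hle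
    · rw [ENNReal.coe_mul, ENNReal.coe_mul, mul_assoc, ← mul_add]
      exact mul_le_mul_right hy _
  · rintro h h' y y' ⟨a, b, hk, hle, hy⟩ ⟨a', b', hk', hle', hy'⟩
    refine ⟨a + a', b + b', fun h => by rw [hk h, hk' h, add_zero], ?_, ?_⟩
    · refine (LForm.add_mono hle hle').trans (le_of_eq ?_)
      ext x
      simp only [LForm.add_apply, LForm.smul_apply, ENNReal.coe_add]
      ring
    · refine le_trans (le_of_eq ?_) (add_le_add hy hy')
      rw [ENNReal.coe_add, ENNReal.coe_add]
      ring

/-- A sublinear functional that is minimal above a prevision is Scott-continuous. -/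
theorem scottContinuous_of_minimal {P : Prevision X} {M : LForm X → ℝ≥0∞}
    (hM : IsSublinearFunctional M) (hPM : P.toFun ≤ M)
    (hmin : ∀ N, IsSublinearFunctional N → P.toFun ≤ N → N ≤ M → M ≤ N) :
    ScottContinuous M := by
  have hle := hmin _ hM.directedEnvelope ?_ ?_
  · intro d hn hd s hs
    refine ⟨hM.mono.mem_upperBounds_image hs.1, fun b hb => (hle s).trans (sInf_le ?_)⟩
    exact ⟨d, hn, hd, hs.2 (LForm.isLUB_pointwiseSup d).1, fun g hg => hb ⟨g, hg, rfl⟩⟩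
  · intro h
    refine le_sInf fun y ⟨d, hn, hd, hs, hy⟩ => (P.mono hs).trans ?_
    rw [P.apply_pointwiseSup hn hd]
    exact iSup₂_le fun g hg => (hPM g).trans (hy g hg)
  · intro h
    refine sInf_le ⟨{h}, Set.singleton_nonempty _, directedOn_singleton _,
      (LForm.isLUB_pointwiseSup _).1 rfl, ?_⟩
    rintro g rfl
    exact le_rfl

/-- A sublinear functional that is minimal above a normalized prevision satisfies
`1 + M h ≤ M (1 + h)`. -/
theorem one_add_le_of_minimal {P : Prevision X} (hP : P.IsNormalized) {M : LForm X → ℝ≥0∞}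
    (hM : IsSublinearFunctional M) (hPM : P.toFun ≤ M)
    (hmin : ∀ N, IsSublinearFunctional N → P.toFun ≤ N → N ≤ M → M ≤ N) (h : LForm X) :
    1 + M h ≤ M (1 + h) := by
  have hle := hmin _ hM.translationEnvelope ?_ ?_
  · have h₁ : 1 ≤ M (1 + h) := by
      refine le_trans ?_ (hPM _)
      rw [hP h]
      exact le_self_add
    have h₂ : M h ≤ M (1 + h) - 1 := by
      refine (hle h).trans (sInf_le ⟨1, ?_⟩)
      rw [LForm.one_smul, ENNReal.coe_one, add_tsub_cancel_of_le h₁]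
    exact (add_le_add le_rfl h₂).trans (add_tsub_cancel_of_le h₁).le
  · intro h
    refine le_sInf fun y ⟨a, hy⟩ => ?_
    have := (hPM _).trans hy
    rw [Prevision.apply_smul_one_add hP] at this
    exact (ENNReal.add_le_add_iff_left ENNReal.coe_ne_top).1 this
  · intro h
    refine sInf_le ⟨0, (hM.add_le _ _).trans ?_⟩
    simp [hM.zero_smul]

/-- Between a prevision and a sublinear functional above it there is a sublinear prevision of
the same flavour. -/
theorem exists_mem_nimP_le {k : PrevKind} (P : Pred k X) {G : LForm X → ℝ≥0∞}
    (hG : IsSublinearFunctional G) (hPG : ∀ h, P.1 h ≤ G h) (hG₁ : k ≠ .plain → G 1 ≤ 1) :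
    ∃ F ∈ nimP P, ∀ h, F.1 h ≤ G h := by
  obtain ⟨M, hMG, hM, hPM, hmin⟩ := hG.exists_minimal (P := P.1.toFun) hPG
  let F : Prevision X := ⟨M, hM.scottContinuous_of_minimal hPM hmin, hM.map_smul⟩
  have hsub : k ≠ .plain → F.IsSubnormalized := fun hk h =>
    (hM.add_le 1 h).trans (add_le_add ((hMG 1).trans (hG₁ hk)) le_rfl)
  have hk : k.Holds F := by
    obtain ⟨P, hP⟩ := P
    cases k with
    | plain => trivial
    | subnormalized => exact hsub (by simp)
    | normalized =>
      exact fun h => le_antisymm (hsub (by simp) h)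
        (hM.one_add_le_of_minimal hP hPM hmin h)
  exact ⟨⟨F, hk, hM.add_le⟩, hPM, hMG⟩

end IsSublinearFunctional

section Duality

variable {k : PrevKind} {X : Type*} [TopologicalSpace X]

/-- Every prevision is, at each `h₀`, equal to some sublinear prevision above it. -/
theorem exists_mem_nimP_apply_eq (P : Pred k X) (h₀ : LForm X) :
    ∃ F ∈ nimP P, F.1 h₀ = P.1 h₀ := by
  have hex := (IsSublinearFunctional.dominating k h₀ (P.1 h₀)).exists_mem_nimP_le P ?_ ?_
  · obtain ⟨F, hF, hle⟩ := hex
    refine ⟨F, hF, le_antisymm ((hle h₀).trans (sInf_le ?_)) (hF h₀)⟩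
    refine ⟨0, 1, fun _ => rfl, fun x => ?_, by simp⟩
    simp [LForm.add_apply, LForm.smul_apply]
  · refine fun h => le_sInf fun y ⟨a, b, hk, hle, hy⟩ => (P.1.mono hle).trans (le_trans ?_ hy)
    rw [← P.1.map_smul]
    by_cases hp : k = .plain
    · rw [hk hp, ENNReal.coe_zero, zero_add]
      refine P.1.mono fun x => ?_
      simp [LForm.add_apply, LForm.smul_apply]
    · exact Prevision.apply_smul_one_add_le (P.2.isSubnormalized hp) a _
  · refine fun hk => sInf_le ⟨1, 0, fun h => absurd h hk, fun x => ?_, by simp⟩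
    simp [LForm.add_apply, LForm.smul_apply]

/-- A family of sublinear previsions that is asymptotically above `P` along an ultrafilter
converges weakly to a sublinear prevision above `P`. -/
theorem exists_mem_nimP_tendsto {ι : Type*} (l : Ultrafilter ι) (F : ι → PredSub k X)
    (P : Pred k X)
    (hP : ∀ (h : LForm X) (r : ℝ≥0), (r : ℝ≥0∞) < P.1 h → ∀ᶠ i in l, (r : ℝ≥0∞) < (F i).1 h) :
    ∃ F₀ ∈ nimP P, Filter.Tendsto F l (nhds F₀) := by
  have hlim : ∀ h : LForm X, ∃ y, Filter.Tendsto (fun i => (F i).1 h) l (nhds y) := fun h =>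
    let ⟨y, _, hy⟩ := isCompact_univ.ultrafilter_le_nhds (l.map fun i => (F i).1 h) (by simp)
    ⟨y, hy⟩
  choose G hG using hlim
  have hGsub : IsSublinearFunctional G :=
    { mono := fun h h' hh => le_of_tendsto_of_tendsto' (hG h) (hG h') fun i => (F i).1.mono hh
      smul_le := fun a h => by
        refine le_of_tendsto_of_tendsto' (hG (a • h))
          (ENNReal.Tendsto.const_mul (hG h) (Or.inr ENNReal.coe_ne_top)) fun i => ?_
        exact ((F i).1.map_smul a h).le
      add_le := fun h h' => le_of_tendsto_of_tendsto' (hG (h + h')) ((hG h).add (hG h'))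
        fun i => (F i).2.2 h h' }
  have hex := hGsub.exists_mem_nimP_le P ?_ ?_
  · obtain ⟨F₀, hF₀, hle⟩ := hex
    refine ⟨F₀, hF₀, tendsto_subtype_rng.2 (Prevision.tendsto_nhds fun h r hr => ?_)⟩
    exact (hG h).eventually (lt_mem_nhds (hr.trans_le (hle h)))
  · refine fun h => ENNReal.le_of_forall_nnreal_lt fun r hr => ?_
    exact ge_of_tendsto (hG h) ((hP h r hr).mono fun _ hi => hi.le)
  · exact fun hk => le_of_tendsto' (hG 1) fun i =>
      ((F i).2.1.isSubnormalized hk).apply_one_le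

theorem isCompact_nimP (P : Pred k X) : IsCompact (nimP P) := by
  refine isCompact_iff_ultrafilter_le_nhds.2 fun l hl => ?_
  refine exists_mem_nimP_tendsto l id P fun h r hr => ?_
  filter_upwards [Filter.le_principal_iff.1 hl] with F hF
  exact hr.trans_le (hF h)

theorem nimP_eq_iInter (P : Pred k X) :
    nimP P = ⋂ h ∈ {h : LForm X | 1 ≤ P.1 h}, {F : PredSub k X | 1 ≤ F.1 h} := by
  ext F
  simp only [Set.mem_iInter]
  refine ⟨fun hF h hh => le_trans hh (hF h), fun hF h => ?_⟩
  refine ENNReal.le_of_forall_nnreal_lt fun r hr => ?_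
  rcases eq_or_ne r 0 with rfl | hr0
  · simp
  have hmul : ∀ y : ℝ≥0∞, 1 ≤ ((r⁻¹ : ℝ≥0) : ℝ≥0∞) * y ↔ (r : ℝ≥0∞) ≤ y := fun y => by
    rw [ENNReal.coe_inv hr0, mul_comm, ← div_eq_mul_inv,
      ENNReal.le_div_iff_mul_le (by simp [hr0]) (by simp), one_mul]
  have := hF (r⁻¹ • h) (by rw [Set.mem_ofPred_eq, P.1.map_smul, hmul]; exact hr.le)
  rwa [Set.mem_ofPred_eq, F.1.map_smul, hmul] at this

/-- `nimP` as a map into `𝒬Pred_sub(X)`. -/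
def nimPQ (P : Pred k X) : QPredSub k X where
  carrier := nimP P
  nonempty := let ⟨F, hF, _⟩ := exists_mem_nimP_apply_eq P 1; ⟨F, hF⟩
  isCompact := isCompact_nimP P
  exists_eq_iInter := ⟨_, nimP_eq_iInter P⟩

theorem exists_apply_eq_minP (Q : QPredSub k X) (h : LForm X) :
    ∃ F ∈ Q.carrier, F.1 h = minP Q.carrier h := by
  have hl : LowerSemicontinuous fun F : PredSub k X => F.1 h :=
    LowerSemicontinuous.comp (Prevision.lowerSemicontinuous_apply h) continuous_subtype_val
  obtain ⟨F, hF, hmin⟩ := (hl.lowerSemicontinuousOn Q.carrier).exists_isMinOn Q.nonempty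
    Q.isCompact
  exact ⟨F, hF, le_antisymm (le_iInf₂ fun F' hF' => hmin hF') (iInf₂_le F hF)⟩

theorem minP_le {Q : Set (PredSub k X)} {F : PredSub k X} (hF : F ∈ Q) (h : LForm X) :
    minP Q h ≤ F.1 h :=
  iInf₂_le F hF

theorem lt_minP_iff (Q : QPredSub k X) (h : LForm X) (r : ℝ≥0∞) :
    r < minP Q.carrier h ↔ ∀ F ∈ Q.carrier, r < F.1 h := by
  refine ⟨fun hr F hF => hr.trans_le (minP_le hF h), fun hr => ?_⟩
  obtain ⟨F, hF, he⟩ := exists_apply_eq_minP Q h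
  exact he ▸ hr F hF

theorem scottContinuous_minP (Q : QPredSub k X) : ScottContinuous (minP Q.carrier) := by
  have hmono : Monotone (minP Q.carrier) := fun h h' hh =>
    le_iInf₂ fun F hF => (minP_le hF h).trans (F.1.mono hh)
  intro d hn hd s hs
  refine ⟨hmono.mem_upperBounds_image hs.1, fun b hb => ?_⟩
  refine ENNReal.le_of_forall_nnreal_lt fun r hr => ?_
  rw [lt_minP_iff] at hr
  have : Nonempty d := hn.to_subtype
  have hcover := Q.isCompact.elim_directed_cover
    (fun g : d => {F : PredSub k X | (r : ℝ≥0∞) < F.1 g.1})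
    (fun g => (Prevision.isOpen_lt_apply g.1 r).preimage continuous_subtype_val) ?_ ?_
  · obtain ⟨g, hg⟩ := hcover
    exact ((lt_minP_iff Q g.1 r).2 fun F hF => hg hF).le.trans (hb ⟨g.1, g.2, rfl⟩)
  · intro F hF
    obtain ⟨_, ⟨g, hg, rfl⟩, hlt⟩ :=
      (lt_isLUB_iff (F.1.scottContinuous hn hd hs)).1 (hr F hF)
    exact Set.mem_iUnion.2 ⟨⟨g, hg⟩, hlt⟩
  · intro g g'
    obtain ⟨e, he, h₁, h₂⟩ := hd g.1 g.2 g'.1 g'.2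
    exact ⟨⟨e, he⟩, fun F hF => hF.trans_le (F.1.mono h₁), fun F hF => hF.trans_le (F.1.mono h₂)⟩

/-- `minP Q` as a prevision. -/
noncomputable def minPPrevision (Q : QPredSub k X) : Prevision X where
  toFun := minP Q.carrier
  scottContinuous := scottContinuous_minP Q
  map_smul a h := by
    refine le_antisymm ?_ ?_
    · obtain ⟨F, hF, he⟩ := exists_apply_eq_minP Q h
      rw [← he, ← F.1.map_smul]
      exact minP_le hF _
    · obtain ⟨F, hF, he⟩ := exists_apply_eq_minP Q (a • h)
      rw [← he, F.1.map_smul]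
      exact mul_le_mul_right (minP_le hF h) _

theorem minPPrevision_isSubnormalized (Q : QPredSub k X)
    (hQ : ∀ F ∈ Q.carrier, F.1.IsSubnormalized) : (minPPrevision Q).IsSubnormalized := by
  intro h
  obtain ⟨F, hF, he⟩ := exists_apply_eq_minP Q h
  change minP Q.carrier (1 + h) ≤ 1 + minP Q.carrier h
  rw [← he]
  exact (minP_le hF _).trans (hQ F hF h)

theorem minPPrevision_isNormalized (Q : QPredSub k X)
    (hQ : ∀ F ∈ Q.carrier, F.1.IsNormalized) : (minPPrevision Q).IsNormalized := by
  intro h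
  refine le_antisymm (minPPrevision_isSubnormalized Q (fun F hF => (hQ F hF).isSubnormalized) h) ?_
  obtain ⟨F, hF, he⟩ := exists_apply_eq_minP Q (1 + h)
  change 1 + minP Q.carrier h ≤ minP Q.carrier (1 + h)
  rw [← he, hQ F hF h]
  exact add_le_add le_rfl (minP_le hF h)

theorem minPPrevision_holds (Q : QPredSub k X) : k.Holds (minPPrevision Q) := by
  cases k with
  | plain => trivial
  | subnormalized => exact minPPrevision_isSubnormalized Q fun F _ => F.2.1
  | normalized => exact minPPrevision_isNormalized Q fun F _ => F.2.1

theorem nimP_minP (Q : QPredSub k X) :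
    nimP ⟨minPPrevision Q, minPPrevision_holds Q⟩ = Q.carrier := by
  refine Set.Subset.antisymm (fun F hF => ?_) fun F hF h => minP_le hF h
  obtain ⟨H, hH⟩ := Q.exists_eq_iInter
  rw [hH]
  refine Set.mem_iInter₂.2 fun h hh => le_trans (le_iInf₂ fun F' hF' => ?_) (hF h)
  rw [hH] at hF'
  exact Set.mem_iInter₂.1 hF' h hh

theorem minP_nimP (P : Pred k X) (h : LForm X) : minP (nimP P) h = P.1 h := by
  obtain ⟨F, hF, he⟩ := exists_mem_nimP_apply_eq P h
  exact le_antisymm (he ▸ minP_le hF h) (le_iInf₂ fun F' hF' => hF' h)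

theorem isOpen_nimP_subset {U : Set (PredSub k X)} (hU : IsOpen U) :
    IsOpen {P : Pred k X | nimP P ⊆ U} := by
  refine isOpen_iff_ultrafilter.2 fun P hP l hl => ?_
  by_contra hnot
  have hmem : {P' : Pred k X | ∃ F ∈ nimP P', F ∉ U} ∈ l := by
    filter_upwards [Ultrafilter.compl_mem_iff_notMem.2 hnot] with P' hP'
    exact Set.not_subset.1 hP'
  obtain ⟨F₁, -⟩ := (nimPQ P).nonempty
  have hch : ∀ P' : Pred k X, ∃ F : PredSub k X,
      (∃ F ∈ nimP P', F ∉ U) → F ∈ nimP P' ∧ F ∉ U := fun P' => by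
    by_cases h : ∃ F ∈ nimP P', F ∉ U
    · exact ⟨h.choose, fun _ => h.choose_spec⟩
    · exact ⟨F₁, fun h' => absurd h' h⟩
  choose F hF using hch
  obtain ⟨F₀, hF₀, ht⟩ := exists_mem_nimP_tendsto l F P fun h r hr => by
    have hopen : ∀ᶠ P' : Pred k X in l, (r : ℝ≥0∞) < P'.1 h := hl
      (((Prevision.isOpen_lt_apply h r).preimage continuous_subtype_val).mem_nhds hr)
    filter_upwards [hopen, hmem] with P' h₁ h₂
    exact h₁.trans_le ((hF P' h₂).1 h)
  have hFU : ∀ᶠ P' in l, F P' ∈ U := ht.eventually (hU.mem_nhds (hP hF₀))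
  obtain ⟨P', h₁, h₂⟩ := (hFU.and hmem).exists
  exact (hF P' h₂).2 h₁

/-- `minP` and `nimP` as mutually inverse homeomorphisms. -/
noncomputable def minPHomeomorph (k : PrevKind) (X : Type*) [TopologicalSpace X] :
    QPredSub k X ≃ₜ Pred k X where
  toFun Q := ⟨minPPrevision Q, minPPrevision_holds Q⟩
  invFun := nimPQ
  left_inv Q := QPredSub.ext (nimP_minP Q)
  right_inv P := Subtype.ext (Prevision.ext (funext (minP_nimP P)))
  continuous_toFun := by
    refine continuous_induced_rng.2 (continuous_generateFrom_iff.2 ?_)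
    rintro _ ⟨h, r, rfl⟩
    refine TopologicalSpace.isOpen_generateFrom_of_mem
      ⟨{F : PredSub k X | (r : ℝ≥0∞) < F.1 h},
        (Prevision.isOpen_lt_apply h r).preimage continuous_subtype_val, ?_⟩
    ext Q
    exact lt_minP_iff Q h r
  continuous_invFun := by
    refine continuous_generateFrom_iff.2 ?_
    rintro _ ⟨U, hU, rfl⟩
    exact isOpen_nimP_subset hU

end Duality

/-- For each flavour of previsions (unconstrained, subnormalized, normalized), the infimum that
defines `minP Q` is attained, and `minP` and `nimP` are mutually inverse homeomorphisms between
`𝒬Pred_sub(X)` and the space of previsions on `X`. -/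
theorem statement17 (k : PrevKind) (X : Type*) [TopologicalSpace X] :
    (∀ (Q : QPredSub k X) (h : LForm X), ∃ F ∈ Q.carrier, F.1 h = minP Q.carrier h) ∧
    ∃ e : QPredSub k X ≃ₜ Pred k X,
      (∀ (Q : QPredSub k X) (h : LForm X), (e Q).1 h = minP Q.carrier h) ∧
      (∀ P : Pred k X, (e.symm P).carrier = nimP P) :=
  ⟨exists_apply_eq_minP, minPHomeomorph k X, fun _ _ => rfl, fun _ => rfl⟩
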